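/- Let F : ℝ^m → ℝ be L-smooth. Let (z_k) be generated by z_{k+1} = z_k + t_k s_k with step sizes t_k > 0, where for each k the direction s_k and an inexact gradient g_k satisfy ‖g_k − ∇F(z_k)‖₂ ≤ δ_k, c₁‖g_k‖₂² ≤ −g_kᵀ s_k, and ‖s_k‖₂ ≤ c₂‖g_k‖₂ for constants c₁ > 0, c₂ > 0 and tolerances δ_k ≥ 0. Then for every k, F(z_{k+1}) ≤ F(z_k) − t_k (c₁ − c₂² (L+1) t_k / 2) ‖g_k‖₂² + δ_k²/2. -/

import Mathlib

/-!
Lipschitz continuity of the derivative bounds `F` above by a quadratic model with slope `F' x` and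
curvature `L`. Replacing `F' x` by an approximation `g` with error `δ` costs at most `δ * ‖d‖` for a
step `d`, and `δ * ‖d‖ ≤ δ ^ 2 / 2 + ‖d‖ ^ 2 / 2` trades this for one more unit of curvature and the
constant `δ ^ 2 / 2`. The claim is the resulting model evaluated at `d = t • s`. Gradients enter
only as functionals, so the argument takes place in a normed space and its dual.
-/

open scoped RealInnerProductSpace

open Set

theorem le_quadratic_of_deriv_le_affine {φ φ' : ℝ → ℝ} {a b p K : ℝ} (hab : a ≤ b)
    (hφ : ∀ u ∈ Icc a b, HasDerivWithinAt φ (φ' u) (Icc a b) u)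
    (hφ' : ∀ u ∈ Ico a b, φ' u ≤ p + K * (u - a)) :
    φ b ≤ φ a + p * (b - a) + K / 2 * (b - a) ^ 2 := by
  have hquadratic (u : ℝ) :
      HasDerivAt (fun u ↦ φ a + p * (u - a) + K / 2 * (u - a) ^ 2) (p + K * (u - a)) u := by
    have hshift : HasDerivAt (fun u ↦ u - a) 1 u := (hasDerivAt_id u).sub_const a
    refine (((hshift.const_mul p).const_add (φ a)).add
      ((hshift.pow 2).const_mul (K / 2))).congr_deriv ?_
    simp only [Nat.cast_ofNat, Nat.add_one_sub_one, pow_one]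
    ring
  exact image_le_of_deriv_right_le_deriv_boundary
    (fun u hu ↦ (hφ u hu).continuousWithinAt)
    (fun u hu ↦ (hφ u (Ico_subset_Icc_self hu)).mono_of_mem_nhdsWithin (Icc_mem_nhdsGE_of_mem hu))
    (by simp)
    (fun u _ ↦ (hquadratic u).continuousAt.continuousWithinAt)
    (fun u _ ↦ (hquadratic u).hasDerivWithinAt)
    hφ' (right_mem_Icc.2 hab)

section NormedSpace

variable {E : Type*} [NormedAddCommGroup E] [NormedSpace ℝ E]
  {D : Set E} {F : E → ℝ} {F' : E → StrongDual ℝ E} {L : ℝ} {x : E}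

theorem le_quadratic_of_lipschitz_fderivWithin {y : E} (hD : Convex ℝ D)
    (hF : ∀ w ∈ D, HasFDerivWithinAt F (F' w) D w)
    (hlip : ∀ w ∈ D, ‖F' w - F' x‖ ≤ L * ‖w - x‖) (hx : x ∈ D) (hy : y ∈ D) :
    F y ≤ F x + F' x (y - x) + L / 2 * ‖y - x‖ ^ 2 := by
  let γ : ℝ → E := AffineMap.lineMap x y
  have hγ_mem : MapsTo γ (Icc 0 1) D := fun u hu ↦ hD.lineMap_mem hx hy hu
  have hderiv (u : ℝ) (hu : u ∈ Icc (0 : ℝ) 1) :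
      HasDerivWithinAt (F ∘ γ) (F' (γ u) (y - x)) (Icc 0 1) u :=
    (hF (γ u) (hγ_mem hu)).comp_hasDerivWithinAt u AffineMap.hasDerivWithinAt_lineMap hγ_mem
  have hslope (u : ℝ) (hu : u ∈ Ico (0 : ℝ) 1) :
      F' (γ u) (y - x) ≤ F' x (y - x) + L * ‖y - x‖ ^ 2 * (u - 0) := by
    have hdist : ‖γ u - x‖ = u * ‖y - x‖ := by
      simp [γ, AffineMap.lineMap_apply_module', norm_smul, abs_of_nonneg hu.1]
    have hsub : (F' (γ u) - F' x) (y - x) ≤ L * (u * ‖y - x‖) * ‖y - x‖ :=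
      (Real.le_norm_self _).trans <| (F' (γ u) - F' x).le_of_opNorm_le
        (hdist ▸ hlip (γ u) (hγ_mem (Ico_subset_Icc_self hu))) (y - x)
    rw [sub_apply] at hsub
    linarith
  simpa [γ, mul_div_right_comm] using le_quadratic_of_deriv_le_affine zero_le_one hderiv hslope

theorem le_quadratic_of_inexact_fderivWithin {y : E} {g : StrongDual ℝ E} {δ : ℝ}
    (hD : Convex ℝ D) (hF : ∀ w ∈ D, HasFDerivWithinAt F (F' w) D w)
    (hlip : ∀ w ∈ D, ‖F' w - F' x‖ ≤ L * ‖w - x‖) (hx : x ∈ D) (hy : y ∈ D)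
    (herr : ‖g - F' x‖ ≤ δ) :
    F y ≤ F x + g (y - x) + (L + 1) / 2 * ‖y - x‖ ^ 2 + δ ^ 2 / 2 := by
  have hexact := le_quadratic_of_lipschitz_fderivWithin hD hF hlip hx hy
  have hslope : F' x (y - x) - g (y - x) ≤ δ * ‖y - x‖ :=
    (Real.le_norm_self _).trans <|
      (F' x - g).le_of_opNorm_le (norm_sub_rev g (F' x) ▸ herr) (y - x)
  have hyoung : 2 * δ * ‖y - x‖ ≤ δ ^ 2 + ‖y - x‖ ^ 2 := two_mul_le_add_sq δ ‖y - x‖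
  linarith

theorem stmt_2_general {s : E} {g : StrongDual ℝ E} {t δ c₁ c₂ : ℝ} (hD : Convex ℝ D)
    (hF : ∀ w ∈ D, HasFDerivWithinAt F (F' w) D w)
    (hlip : ∀ w ∈ D, ‖F' w - F' x‖ ≤ L * ‖w - x‖) (hx : x ∈ D) (hxs : x + t • s ∈ D)
    (hc₁ : 0 < c₁) (ht : 0 < t) (herr : ‖g - F' x‖ ≤ δ)
    (hdesc : c₁ * ‖g‖ ^ 2 ≤ -g s) (hbnd : ‖s‖ ≤ c₂ * ‖g‖) :
    F (x + t • s) ≤ F x - t * (c₁ - c₂ ^ 2 * (L + 1) * t / 2) * ‖g‖ ^ 2 + δ ^ 2 / 2 := by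
  have hcurv : (L + 1) * ‖s‖ ^ 2 ≤ (L + 1) * (c₂ * ‖g‖) ^ 2 := by
    -- The Lipschitz bound yields `0 ≤ L` only along a nonzero step; otherwise both sides vanish.
    rcases eq_or_ne s 0 with rfl | hs
    · have hsq : ‖g‖ ^ 2 ≤ 0 := nonpos_of_mul_nonpos_right (by simpa using hdesc) hc₁
      have hg : g = 0 := by simpa using hsq
      simp [hg]
    · have hstep : 0 < ‖x + t • s - x‖ := by simp [ht.ne', hs]
      have hL : 0 ≤ L :=
        nonneg_of_mul_nonneg_left ((norm_nonneg _).trans (hlip _ hxs)) hstep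
      gcongr
  have hmodel := le_quadratic_of_inexact_fderivWithin hD hF hlip hx hxs herr
  rw [add_sub_cancel_left, map_smul, smul_eq_mul, norm_smul, Real.norm_of_nonneg ht.le] at hmodel
  calc
    F (x + t • s) ≤ F x - t * -g s + t ^ 2 / 2 * ((L + 1) * ‖s‖ ^ 2) + δ ^ 2 / 2 := by
      linarith
    _ ≤ F x - t * (c₁ * ‖g‖ ^ 2) + t ^ 2 / 2 * ((L + 1) * (c₂ * ‖g‖) ^ 2) + δ ^ 2 / 2 := by
      gcongr
    _ = F x - t * (c₁ - c₂ ^ 2 * (L + 1) * t / 2) * ‖g‖ ^ 2 + δ ^ 2 / 2 := by ring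

end NormedSpace

/-- basic descent inequality for the inexact general descent method. -/
theorem stmt_2 (m : ℕ) (F : EuclideanSpace ℝ (Fin m) → ℝ) (L : ℝ)
    (hdiff : Differentiable ℝ F)
    (hlip : ∀ x y : EuclideanSpace ℝ (Fin m), ‖gradient F x - gradient F y‖ ≤ L * ‖x - y‖)
    (z s g : ℕ → EuclideanSpace ℝ (Fin m)) (t δ : ℕ → ℝ)
    (c₁ c₂ : ℝ) (hc₁ : 0 < c₁) (hc₂ : 0 < c₂)
    (ht : ∀ k, 0 < t k) (hδ : ∀ k, 0 ≤ δ k)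
    (hupd : ∀ k, z (k + 1) = z k + t k • s k)
    (herr : ∀ k, ‖g k - gradient F (z k)‖ ≤ δ k)
    (hdesc : ∀ k, c₁ * ‖g k‖ ^ 2 ≤ -⟪g k, s k⟫)
    (hbnd : ∀ k, ‖s k‖ ≤ c₂ * ‖g k‖) :
    ∀ k, F (z (k + 1)) ≤
      F (z k) - t k * (c₁ - c₂ ^ 2 * (L + 1) * t k / 2) * ‖g k‖ ^ 2 + (δ k) ^ 2 / 2 := by
  intro k
  let dual := InnerProductSpace.toDual ℝ (EuclideanSpace ℝ (Fin m))
  rw [hupd k]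
  simpa [dual] using stmt_2_general (F' := fun y ↦ dual (gradient F y)) (g := dual (g k))
    convex_univ (fun y _ ↦ (hdiff y).hasGradientAt.hasFDerivAt.hasFDerivWithinAt)
    (fun y _ ↦ by simpa [← map_sub] using hlip y (z k)) (mem_univ _) (mem_univ _) hc₁ (ht k)
    (by simpa [← map_sub] using herr k) (by simpa [dual] using hdesc k)
    (by simpa [dual] using hbnd k)
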